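/- arXiv:1305.3120 — 2 statements merged into one kernel-verified Lean document; each statement's English description precedes it below -/
import Mathlib

section
/- Let Θ ⊆ ℝ^p be a convex set and f : ℝ^p → ℝ be μ-strongly convex (μ > 0) with minimizer θ* over Θ and f* := f(θ*). Let (θ_n)_{n≥0} be a sequence in Θ such that for every n ≥ 1 there exists g_n ∈ S_L(f,θ_{n−1}) with θ_n a minimizer of g_n over Θ. Define β := L/μ if μ > 2L, and β := 1 − μ/(4L) otherwise. Then for all n ≥ 1: f(θ_n) − f* ≤ β^n (f(θ₀) − f*). -/
/-!
Write `δ n = f (θs n) - f θstar`. If `θ'` minimizes a surrogate `g` of `f` near `κ` over `Θ`, then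
`f θ' ≤ g θ' ≤ g θ = f θ + (g - f) θ ≤ f θ + L/2 * ‖θ - κ‖ ^ 2` for every `θ ∈ Θ`, the last step
being the descent lemma for the error `g - f` (`le_of_lipschitz_gradient`). Taking
`θ = a • θstar + (1 - a) • κ` with `a ∈ [0, 1]`, convexity of `f` together with the quadratic growth
`μ/2 * ‖κ - θstar‖ ^ 2 ≤ f κ - f θstar` (`quadratic_growth`) gives the one-step contraction
`δ (n + 1) ≤ (1 - a + L/μ * a ^ 2) * δ n` (`surrogate_step`). The factor is minimized over `[0, 1]`
by `a = 1` if `2 * L < μ` and by `a = μ / (2 * L)` otherwise, with minimum `β`.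
-/

/-- `g` is a first-order surrogate of `f` near `κ` on `Θ` with constant `L`
(the class `S_L(f,κ)`). -/
def IsFirstOrderSurrogate {E : Type*} [NormedAddCommGroup E] [InnerProductSpace ℝ E]
    [CompleteSpace E] (Θ : Set E) (L : ℝ) (f g : E → ℝ) (κ : E) : Prop :=
  (∀ θ' ∈ Θ, (∀ θ ∈ Θ, g θ' ≤ g θ) → f θ' ≤ g θ') ∧
  Differentiable ℝ (fun θ => g θ - f θ) ∧
  (∀ x y : E, ‖gradient (fun θ => g θ - f θ) x - gradient (fun θ => g θ - f θ) y‖ ≤ L * ‖x - y‖) ∧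
  g κ - f κ = 0 ∧
  gradient (fun θ => g θ - f θ) κ = 0

/-- `g` is `μ`-strongly convex: `θ ↦ g θ - (μ/2)‖θ‖²` is convex. -/
def StronglyConvex {E : Type*} [NormedAddCommGroup E] [InnerProductSpace ℝ E]
    (μ : ℝ) (g : E → ℝ) : Prop :=
  ConvexOn ℝ Set.univ (fun θ => g θ - μ / 2 * ‖θ‖ ^ 2)

/-- Descent lemma, at a point where both the function and its gradient vanish. -/
lemma le_of_lipschitz_gradient {E : Type*} [NormedAddCommGroup E] [InnerProductSpace ℝ E]
    [CompleteSpace E] {h : E → ℝ} {L : ℝ} {κ : E} (hd : Differentiable ℝ h)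
    (hLip : ∀ x y : E, ‖gradient h x - gradient h y‖ ≤ L * ‖x - y‖)
    (h0 : h κ = 0) (h1 : gradient h κ = 0) (x : E) :
    h x ≤ L / 2 * ‖x - κ‖ ^ 2 := by
  set v := x - κ with hv
  have hder (t : ℝ) : HasDerivAt (fun t : ℝ => h (κ + t • v))
      (inner ℝ (gradient h (κ + t • v)) v) t := by
    have hline : HasDerivAt (fun t : ℝ => κ + t • v) v t := by
      simpa using ((hasDerivAt_id t).smul_const v).const_add κ
    have := (hd (κ + t • v)).hasGradientAt.hasFDerivAt.comp_hasDerivAt t hline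
    simpa [Function.comp_def] using this
  have hder' (t : ℝ) : HasDerivAt (fun t : ℝ => L / 2 * ‖v‖ ^ 2 * t ^ 2)
      (L * ‖v‖ ^ 2 * t) t := by
    refine ((hasDerivAt_pow 2 t).const_mul (L / 2 * ‖v‖ ^ 2)).congr_deriv ?_
    push_cast
    ring
  have key := image_le_of_deriv_right_le_deriv_boundary (a := (0 : ℝ)) (b := 1)
    (f := fun t : ℝ => h (κ + t • v)) (B := fun t : ℝ => L / 2 * ‖v‖ ^ 2 * t ^ 2)
    (fun t _ => (hder t).continuousAt.continuousWithinAt)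
    (fun t _ => (hder t).hasDerivWithinAt) (by simp [h0])
    (fun t _ => (hder' t).continuousAt.continuousWithinAt)
    (fun t _ => (hder' t).hasDerivWithinAt) (fun t ht => by
      have hg : ‖gradient h (κ + t • v)‖ ≤ L * (t * ‖v‖) := by
        have := hLip (κ + t • v) κ
        rwa [h1, sub_zero, add_sub_cancel_left, norm_smul, Real.norm_of_nonneg ht.1] at this
      calc inner ℝ (gradient h (κ + t • v)) v ≤ ‖gradient h (κ + t • v)‖ * ‖v‖ :=
            real_inner_le_norm _ _
        _ ≤ L * (t * ‖v‖) * ‖v‖ := by gcongr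
        _ = L * ‖v‖ ^ 2 * t := by ring)
    (Set.right_mem_Icc.2 zero_le_one)
  simpa [hv] using key

lemma StronglyConvex.strongConvexOn {E : Type*} [NormedAddCommGroup E] [InnerProductSpace ℝ E]
    {μ : ℝ} {f : E → ℝ} (h : StronglyConvex μ f) : StrongConvexOn Set.univ μ f :=
  strongConvexOn_iff_convex.2 h

/-- A strongly convex function grows quadratically away from its minimizer over a convex set; no
differentiability is needed. -/
lemma quadratic_growth {E : Type*} [NormedAddCommGroup E] [InnerProductSpace ℝ E]
    {Θ : Set E} (hΘ : Convex ℝ Θ) {f : E → ℝ} {μ : ℝ} (hsc : StronglyConvex μ f)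
    {z : E} (hz : z ∈ Θ) (hmin : ∀ θ ∈ Θ, f z ≤ f θ) {θ : E} (hθ : θ ∈ Θ) :
    μ / 2 * ‖θ - z‖ ^ 2 ≤ f θ - f z := by
  -- Comparing `f z` with `f` at `t • θ + (1 - t) • z` and dividing by `t > 0`.
  have hseg : ∀ t ∈ Set.Ioo (0 : ℝ) 1, (1 - t) * (μ / 2 * ‖θ - z‖ ^ 2) ≤ f θ - f z := by
    rintro t ⟨ht0, ht1⟩
    have h1 := hmin _ (hΘ hθ hz ht0.le (sub_nonneg.2 ht1.le) (by ring))
    have h2 := hsc.strongConvexOn.2 (Set.mem_univ θ) (Set.mem_univ z) ht0.le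
      (sub_nonneg.2 ht1.le) (by ring)
    simp only [smul_eq_mul] at h2
    refine le_of_mul_le_mul_left ?_ ht0
    linarith
  have hlim : Filter.Tendsto (fun t : ℝ => (1 - t) * (μ / 2 * ‖θ - z‖ ^ 2))
      (nhdsWithin 0 (Set.Ioi 0)) (nhds (μ / 2 * ‖θ - z‖ ^ 2)) := by
    have : Continuous fun t : ℝ => (1 - t) * (μ / 2 * ‖θ - z‖ ^ 2) := by fun_prop
    simpa using (this.tendsto 0).mono_left nhdsWithin_le_nhds
  refine le_of_tendsto hlim ?_
  filter_upwards [Ioo_mem_nhdsGT (zero_lt_one' ℝ)] with t ht using hseg t ht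

/-- One-step contraction, with the factor depending on the point at parameter `a` of the segment from
`κ` to the minimizer `z` at which the surrogate is compared with its minimum. -/
lemma surrogate_step {E : Type*} [NormedAddCommGroup E] [InnerProductSpace ℝ E]
    [CompleteSpace E] {Θ : Set E} (hΘ : Convex ℝ Θ) {f g : E → ℝ} {μ L : ℝ} (hμ : 0 < μ)
    (hL : 0 < L) (hsc : StronglyConvex μ f) {z κ θ' : E} (hz : z ∈ Θ)
    (hminf : ∀ θ ∈ Θ, f z ≤ f θ) (hκ : κ ∈ Θ) (hsur : IsFirstOrderSurrogate Θ L f g κ)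
    (hθ' : θ' ∈ Θ) (hmin : ∀ θ ∈ Θ, g θ' ≤ g θ) {a : ℝ} (ha0 : 0 ≤ a) (ha1 : a ≤ 1) :
    f θ' - f z ≤ (1 - a + L / μ * a ^ 2) * (f κ - f z) := by
  obtain ⟨hmaj, hd, hLip, h0, h1⟩ := hsur
  have hfg := hmaj θ' hθ' hmin
  have hg := hmin _ (hΘ hz hκ ha0 (sub_nonneg.2 ha1) (by ring))
  have hh := le_of_lipschitz_gradient hd hLip h0 h1 (a • z + (1 - a) • κ)
  have hdist : ‖a • z + (1 - a) • κ - κ‖ ^ 2 = a ^ 2 * ‖κ - z‖ ^ 2 := by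
    have : a • z + (1 - a) • κ - κ = a • (z - κ) := by module
    rw [this, norm_smul, mul_pow, norm_sub_rev, Real.norm_eq_abs, sq_abs]
  rw [hdist] at hh
  have hf := hsc.strongConvexOn.2 (Set.mem_univ z) (Set.mem_univ κ) ha0
    (sub_nonneg.2 ha1) (by ring)
  simp only [smul_eq_mul] at hf
  have hpos : 0 ≤ a * (1 - a) * (μ / 2 * ‖z - κ‖ ^ 2) := by
    have := sub_nonneg.2 ha1
    positivity
  have hquad : L / 2 * (a ^ 2 * ‖κ - z‖ ^ 2) ≤ L / μ * a ^ 2 * (f κ - f z) :=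
    calc L / 2 * (a ^ 2 * ‖κ - z‖ ^ 2) = L / μ * a ^ 2 * (μ / 2 * ‖κ - z‖ ^ 2) := by
          field_simp
      _ ≤ _ := by gcongr; exact quadratic_growth hΘ hsc hz hminf hκ
  linarith

/-- Convex analysis of the basic scheme for `μ`-strongly convex `f` with
surrogates in `S_L(f, θ_{n-1})`: linear convergence with rate
`β = L/μ` if `μ > 2L`, and `β = 1 - μ/(4L)` otherwise. -/
theorem stmt4 {p : ℕ} (Θ : Set (EuclideanSpace ℝ (Fin p))) (hΘ : Convex ℝ Θ)
    (f : EuclideanSpace ℝ (Fin p) → ℝ) (μ : ℝ) (hμ : 0 < μ)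
    (hsc : StronglyConvex μ f)
    (θstar : EuclideanSpace ℝ (Fin p)) (hθstarΘ : θstar ∈ Θ)
    (hminf : ∀ θ ∈ Θ, f θstar ≤ f θ)
    (L : ℝ) (hL : 0 < L)
    (θs : ℕ → EuclideanSpace ℝ (Fin p)) (hθsΘ : ∀ n, θs n ∈ Θ)
    (gs : ℕ → EuclideanSpace ℝ (Fin p) → ℝ)
    (hsur : ∀ n : ℕ, IsFirstOrderSurrogate Θ L f (gs (n + 1)) (θs n))
    (hmin : ∀ n : ℕ, ∀ θ ∈ Θ, gs (n + 1) (θs (n + 1)) ≤ gs (n + 1) θ) :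
    ∀ n : ℕ, 1 ≤ n → f (θs n) - f θstar ≤
      (if 2 * L < μ then L / μ else 1 - μ / (4 * L)) ^ n * (f (θs 0) - f θstar) := by
  set β : ℝ := if 2 * L < μ then L / μ else 1 - μ / (4 * L) with hβ
  have hβ0 : 0 ≤ β := by
    rw [hβ]
    split_ifs with hc
    · positivity
    · rw [sub_nonneg, div_le_one (by positivity)]
      linarith
  have hstep (n : ℕ) : f (θs (n + 1)) - f θstar ≤ β * (f (θs n) - f θstar) := by
    have key {a : ℝ} := surrogate_step (a := a) hΘ hμ hL hsc hθstarΘ hminf (hθsΘ n) (hsur n)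
      (hθsΘ (n + 1)) (hmin n)
    rw [hβ]
    split_ifs with hc
    · simpa using key zero_le_one le_rfl
    · have hval : 1 - μ / (2 * L) + L / μ * (μ / (2 * L)) ^ 2 = 1 - μ / (4 * L) := by
        field_simp
        ring
      rw [← hval]
      exact key (by positivity) ((div_le_one (by positivity)).2 (not_lt.1 hc))
  have hall (n : ℕ) : f (θs n) - f θstar ≤ β ^ n * (f (θs 0) - f θstar) := by
    induction n with
    | zero => simp
    | succ n ih =>
      calc f (θs (n + 1)) - f θstar ≤ β * (f (θs n) - f θstar) := hstep n
        _ ≤ β * (β ^ n * (f (θs 0) - f θstar)) := by gcongr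
        _ = β ^ (n + 1) * (f (θs 0) - f θstar) := by ring
  exact fun n _ => hall n
end

section
/- Let Θ ⊆ ℝ^p be a convex set and f : ℝ^p → ℝ be μ-strongly convex (μ > 0) with minimizer θ* over Θ and f* := f(θ*). Let ρ ≥ L > 0 and let (θ_n)_{n≥0} be a sequence in Θ such that for every n ≥ 1 there exists g_n ∈ S_{L,ρ}(f,θ_{n−1}) with θ_n the minimizer of g_n over Θ. Then for all n ≥ 1: ‖θ_n − θ*‖₂² ≤ (L/(ρ+μ))^n ‖θ₀ − θ*‖₂², and f(θ_n) − f* ≤ (L/(ρ+μ))^{n−1} · L‖θ₀ − θ*‖₂²/2. -/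
/-- Quadratic growth away from a minimizer: compare the minimizer `x` with the points
`(1 - t) x + t y` and let `t → 0`. -/
lemma StronglyConvex.add_sq_le_of_min {E : Type*} [NormedAddCommGroup E] [InnerProductSpace ℝ E]
    {m : ℝ} {φ : E → ℝ} (hφ : StronglyConvex m φ) {Θ : Set E} (hΘ : Convex ℝ Θ) {x y : E}
    (hx : x ∈ Θ) (hy : y ∈ Θ) (hmin : ∀ z ∈ Θ, φ x ≤ φ z) :
    φ x + m / 2 * ‖x - y‖ ^ 2 ≤ φ y := by
  have hs : StrongConvexOn Set.univ m φ := strongConvexOn_iff_convex.2 hφ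
  have key : ∀ t ∈ Set.Ioo (0 : ℝ) 1, φ x + (1 - t) * (m / 2 * ‖x - y‖ ^ 2) ≤ φ y := by
    rintro t ⟨h0, h1⟩
    have h2 := hs.2 (Set.mem_univ x) (Set.mem_univ y) (sub_nonneg.2 h1.le) h0.le
      (sub_add_cancel 1 t)
    have h3 := hmin _ (hΘ hx hy (sub_nonneg.2 h1.le) h0.le (sub_add_cancel 1 t))
    simp only [smul_eq_mul] at h2
    refine le_of_mul_le_mul_left ?_ h0
    linarith
  have hlim : Filter.Tendsto (fun t : ℝ => φ x + (1 - t) * (m / 2 * ‖x - y‖ ^ 2))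
      (nhdsWithin 0 (Set.Ioi 0)) (nhds (φ x + (1 - 0) * (m / 2 * ‖x - y‖ ^ 2))) :=
    (Continuous.tendsto (by fun_prop) 0).mono_left nhdsWithin_le_nhds
  have := le_of_tendsto hlim
    (Filter.mem_of_superset (Ioo_mem_nhdsGT one_pos) key)
  simpa using this

/-- A differentiable function whose gradient is `L`-Lipschitz and which vanishes to first order
at `κ` lies below the parabola `(L/2)‖y − κ‖²`: along the segment from `κ` to `y`, the difference
of the two has nonpositive derivative. -/
lemma le_sq_of_gradient_lipschitz {E : Type*} [NormedAddCommGroup E] [InnerProductSpace ℝ E]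
    [CompleteSpace E] {h : E → ℝ} {L : ℝ} {κ : E} (hd : Differentiable ℝ h)
    (hlip : ∀ x y : E, ‖gradient h x - gradient h y‖ ≤ L * ‖x - y‖)
    (h0 : h κ = 0) (hg : gradient h κ = 0) (y : E) :
    h y ≤ L / 2 * ‖y - κ‖ ^ 2 := by
  set v := y - κ with hv
  have hder : ∀ t : ℝ, HasDerivAt (fun t : ℝ => h (κ + t • v) - L / 2 * ‖v‖ ^ 2 * t ^ 2)
      (inner ℝ (gradient h (κ + t • v)) v - L * ‖v‖ ^ 2 * t) t := by
    intro t
    have h1 : HasDerivAt (fun t : ℝ => κ + t • v) v t := by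
      simpa using ((hasDerivAt_id t).smul_const v).const_add κ
    have h2 := (hd (κ + t • v)).hasGradientAt.hasFDerivAt.comp_hasDerivAt t h1
    have h3 := ((hasDerivAt_id t).pow 2).const_mul (L / 2 * ‖v‖ ^ 2)
    refine (h2.sub h3).congr_deriv ?_
    simp only [InnerProductSpace.toDual_apply_apply, id]
    push_cast
    ring
  have hanti : AntitoneOn (fun t : ℝ => h (κ + t • v) - L / 2 * ‖v‖ ^ 2 * t ^ 2)
      (Set.Icc 0 1) := by
    refine antitoneOn_of_deriv_nonpos (convex_Icc 0 1)
      (fun t _ => (hder t).continuousAt.continuousWithinAt)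
      (fun t _ => (hder t).differentiableAt.differentiableWithinAt) fun t ht => ?_
    rw [interior_Icc] at ht
    rw [(hder t).deriv]
    have h1 := hlip (κ + t • v) κ
    rw [hg, sub_zero, add_sub_cancel_left, norm_smul, Real.norm_of_nonneg ht.1.le] at h1
    have h2 := real_inner_le_norm (gradient h (κ + t • v)) v
    have h3 := mul_le_mul_of_nonneg_right h1 (norm_nonneg v)
    nlinarith
  have := hanti (Set.left_mem_Icc.2 zero_le_one) (Set.right_mem_Icc.2 zero_le_one) zero_le_one
  simp only [one_smul, zero_smul, add_zero, h0, hv, add_sub_cancel] at this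
  linarith

lemma sub_le_of_surrogate {E : Type*} [NormedAddCommGroup E] [InnerProductSpace ℝ E]
    [CompleteSpace E] {Θ : Set E} {L : ℝ} {f g : E → ℝ} {κ : E}
    (hs : IsFirstOrderSurrogate Θ L f g κ) (y : E) :
    g y - f y ≤ L / 2 * ‖y - κ‖ ^ 2 :=
  le_sq_of_gradient_lipschitz (h := fun θ => g θ - f θ) hs.2.1 hs.2.2.1 hs.2.2.2.1 hs.2.2.2.2 y

/-- Strongly convex analysis of the basic scheme with `ρ`-strongly convex
surrogates in `S_{L,ρ}(f, θ_{n-1})`, `ρ ≥ L`: linear convergence with rate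
`L/(ρ+μ)` of both the iterates and the function values. -/
theorem stmt6 {p : ℕ} (Θ : Set (EuclideanSpace ℝ (Fin p))) (hΘ : Convex ℝ Θ)
    (f : EuclideanSpace ℝ (Fin p) → ℝ) (μ : ℝ) (hμ : 0 < μ)
    (hscf : StronglyConvex μ f)
    (θstar : EuclideanSpace ℝ (Fin p)) (hθstarΘ : θstar ∈ Θ)
    (hminf : ∀ θ ∈ Θ, f θstar ≤ f θ)
    (L ρ : ℝ) (hL : 0 < L) (hρL : L ≤ ρ)
    (θs : ℕ → EuclideanSpace ℝ (Fin p)) (hθsΘ : ∀ n, θs n ∈ Θ)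
    (gs : ℕ → EuclideanSpace ℝ (Fin p) → ℝ)
    (hsur : ∀ n : ℕ, IsFirstOrderSurrogate Θ L f (gs (n + 1)) (θs n))
    (hsc : ∀ n : ℕ, StronglyConvex ρ (gs (n + 1)))
    (hmin : ∀ n : ℕ, ∀ θ ∈ Θ, gs (n + 1) (θs (n + 1)) ≤ gs (n + 1) θ) :
    ∀ n : ℕ, 1 ≤ n →
      ‖θs n - θstar‖ ^ 2 ≤ (L / (ρ + μ)) ^ n * ‖θs 0 - θstar‖ ^ 2 ∧
      f (θs n) - f θstar ≤ (L / (ρ + μ)) ^ (n - 1) * (L * ‖θs 0 - θstar‖ ^ 2 / 2) := by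
  have step : ∀ n, f (θs (n + 1)) - f θstar + ρ / 2 * ‖θs (n + 1) - θstar‖ ^ 2
      ≤ L / 2 * ‖θs n - θstar‖ ^ 2 := by
    intro n
    have h1 := (hsc n).add_sq_le_of_min hΘ (hθsΘ (n + 1)) hθstarΘ (hmin n)
    have h2 := sub_le_of_surrogate (hsur n) θstar
    have h3 := (hsur n).1 _ (hθsΘ (n + 1)) (hmin n)
    rw [norm_sub_rev θstar] at h2
    linarith
  have grow : ∀ n, μ / 2 * ‖θs n - θstar‖ ^ 2 ≤ f (θs n) - f θstar := by
    intro n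
    have h1 := hscf.add_sq_le_of_min hΘ hθstarΘ (hθsΘ n) hminf
    rw [norm_sub_rev θstar] at h1
    linarith
  have hρμ : 0 < ρ + μ := by linarith
  have dist : ∀ n, ‖θs n - θstar‖ ^ 2 ≤ (L / (ρ + μ)) ^ n * ‖θs 0 - θstar‖ ^ 2 := by
    intro n
    induction n with
    | zero => simp
    | succ n ih =>
      have h1 : ‖θs (n + 1) - θstar‖ ^ 2 ≤ L / (ρ + μ) * ‖θs n - θstar‖ ^ 2 := by
        rw [div_mul_eq_mul_div, le_div_iff₀ hρμ]
        linarith [step n, grow (n + 1)]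
      calc ‖θs (n + 1) - θstar‖ ^ 2 ≤ L / (ρ + μ) * ‖θs n - θstar‖ ^ 2 := h1
        _ ≤ L / (ρ + μ) * ((L / (ρ + μ)) ^ n * ‖θs 0 - θstar‖ ^ 2) := by gcongr
        _ = (L / (ρ + μ)) ^ (n + 1) * ‖θs 0 - θstar‖ ^ 2 := by ring
  intro n hn
  obtain ⟨k, rfl⟩ := Nat.exists_eq_add_of_le' hn
  refine ⟨dist (k + 1), ?_⟩
  have h1 : 0 ≤ ρ / 2 * ‖θs (k + 1) - θstar‖ ^ 2 :=
    mul_nonneg (by linarith) (sq_nonneg _)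
  have h2 := mul_le_mul_of_nonneg_left (dist k) (half_pos hL).le
  rw [Nat.add_sub_cancel]
  linarith [step k]
end
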